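/- arXiv:1605.08838 — 2 statements merged into one kernel-verified Lean document; each statement's English description precedes it below -/
import Mathlib

section
/- Let p ∈ (1/2, 1] and S ∈ ℕ. Let (Z(t))_{t≥0} be an integer-valued process adapted to a filtration (F_t) with Z(0) = 0, |Z(t+1) − Z(t)| = 1 almost surely, and P(Z(t+1) = Z(t) + 1 | F_t) ≥ p almost surely for every t. Then E[∑_{t=0}^∞ 1{Z(t) ≤ S}] ≤ (p + S(2p − 1))/(2p − 1)². -/
/-!
The proof compares `Z` with the nearest-neighbour walk on `ℤ` that steps up with probability
exactly `p`. Let `d = 2p - 1` and let `potential p S z` be the expected time that this walk,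
started at `z`, spends at levels `≤ S`:
`p / d² + (S - z) / d` for `z ≤ S`, and `(p / d²) ((1 - p) / p) ^ (z - S)` for `z > S`.
This function is nonnegative, nonincreasing, and solves
`p G (z + 1) + (1 - p) G (z - 1) + 1{z ≤ S} = G z` (`potential_harmonic`).
As `G` is nonincreasing, an up-probability larger than `p` only helps, so
`E[G (Z (t + 1))] + P(Z t ≤ S) ≤ E[G (Z t)]` (`expect_potential_succ`).
Telescoping bounds every partial sum of `P(Z t ≤ S)` by `G 0`, which is the claimed constant.
`G` is unbounded at `-∞`, but `|Z t| ≤ t` almost surely, so all expectations are finite.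
-/

open MeasureTheory ProbabilityTheory
open scoped ENNReal

/-- Expected time spent at levels `≤ S` by the walk on `ℤ` started at `z` that steps up with
probability `p` and down with probability `1 - p`. -/
noncomputable def potential (p : ℝ) (S : ℕ) (z : ℤ) : ℝ :=
  if z ≤ S then p / (2 * p - 1) ^ 2 + (S - z) / (2 * p - 1)
  else p / (2 * p - 1) ^ 2 * ((1 - p) / p) ^ (z - S).toNat

lemma potential_of_le {p : ℝ} {S : ℕ} {z : ℤ} (h : z ≤ S) :
    potential p S z = p / (2 * p - 1) ^ 2 + (S - z) / (2 * p - 1) := if_pos h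

/-- At `z = S` both branches of the definition agree. -/
lemma potential_add_nat {p : ℝ} {S : ℕ} (n : ℕ) :
    potential p S (S + n) = p / (2 * p - 1) ^ 2 * ((1 - p) / p) ^ n := by
  rcases Nat.eq_zero_or_pos n with rfl | hn
  · rw [potential_of_le (by simp)]; simp
  · rw [potential, if_neg (by omega)]; congr 2; omega

lemma potential_nonneg {p : ℝ} (hp : p ∈ Set.Ioc (1 / 2 : ℝ) 1) (S : ℕ) (z : ℤ) :
    0 ≤ potential p S z := by
  obtain ⟨h1, h2⟩ := hp
  have hd : 0 < 2 * p - 1 := by linarith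
  have hp0 : 0 < p := by linarith
  have hq : 0 ≤ 1 - p := by linarith
  unfold potential
  split_ifs with h
  · have : (z : ℝ) ≤ S := by exact_mod_cast h
    have : 0 ≤ (S : ℝ) - z := by linarith
    positivity
  · positivity

lemma potential_antitone {p : ℝ} (hp : p ∈ Set.Ioc (1 / 2 : ℝ) 1) (S : ℕ) :
    Antitone (potential p S) := by
  obtain ⟨h1, h2⟩ := hp
  have hd : 0 < 2 * p - 1 := by linarith
  have hp0 : 0 < p := by linarith
  have hq : 0 ≤ 1 - p := by linarith
  refine antitone_int_of_succ_le fun z => ?_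
  rcases lt_or_ge z (S : ℤ) with h | h
  · rw [potential_of_le h.le, potential_of_le (by omega)]
    push_cast
    gcongr
    linarith
  · obtain ⟨n, hn⟩ := Int.le.dest h
    rw [← hn, add_assoc, ← Nat.cast_succ, potential_add_nat, potential_add_nat]
    refine mul_le_mul_of_nonneg_left ?_ (by positivity)
    refine pow_le_pow_of_le_one (by positivity) ?_ (Nat.le_succ n)
    rw [div_le_one hp0]; linarith

lemma potential_harmonic {p : ℝ} (hp : p ∈ Set.Ioc (1 / 2 : ℝ) 1) (S : ℕ) (z : ℤ) :
    p * potential p S (z + 1) + (1 - p) * potential p S (z - 1) + (if z ≤ (S : ℤ) then 1 else 0)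
      = potential p S z := by
  obtain ⟨h1, h2⟩ := hp
  have hi : (2 * p - 1) * (2 * p - 1)⁻¹ = 1 := mul_inv_cancel₀ (by linarith)
  have hr : p * ((1 - p) / p) = 1 - p := mul_div_cancel₀ _ (by linarith)
  rcases lt_trichotomy z (S : ℤ) with h | h | h
  · rw [potential_of_le h.le, potential_of_le (z := z + 1) (by omega),
      potential_of_le (by omega), if_pos h.le]
    simp only [div_eq_mul_inv, ← inv_pow]
    generalize (2 * p - 1)⁻¹ = i at hi ⊢
    push_cast
    linear_combination -hi
  · subst h
    have e := potential_add_nat (p := p) (S := S) 1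
    rw [Nat.cast_one] at e
    rw [e, potential_of_le le_rfl, potential_of_le (by omega), if_pos le_rfl]
    generalize (1 - p) / p = r at hr ⊢
    simp only [div_eq_mul_inv, ← inv_pow]
    generalize (2 * p - 1)⁻¹ = i at hi ⊢
    push_cast
    linear_combination (-(p * i) - 1) * hi + p * i ^ 2 * hr
  · obtain ⟨n, rfl⟩ : ∃ n : ℕ, z = S + ((n + 1 : ℕ) : ℤ) := ⟨(z - S - 1).toNat, by omega⟩
    have e1 : (S : ℤ) + ((n + 1 : ℕ) : ℤ) + 1 = S + ((n + 2 : ℕ) : ℤ) := by push_cast; ring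
    have e2 : (S : ℤ) + ((n + 1 : ℕ) : ℤ) - 1 = S + (n : ℤ) := by push_cast; ring
    rw [e1, e2, potential_add_nat, potential_add_nat, potential_add_nat, if_neg (by omega)]
    generalize (1 - p) / p = r at hr ⊢
    generalize p / (2 * p - 1) ^ 2 = a
    linear_combination a * r ^ n * (r - 1) * hr

/-- `E[D 1_A] ≥ c E[D]` for nonnegative bounded `m`-measurable `D`, when `P(A | m) ≥ c`. -/
lemma integral_mul_indicator_ge {Ω : Type*} {m m0 : MeasurableSpace Ω} {μ : Measure Ω}
    [IsProbabilityMeasure μ] (hm : m ≤ m0) {c C : ℝ} {A : Set Ω} (hA : MeasurableSet[m0] A)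
    {D : Ω → ℝ} (hD : StronglyMeasurable[m] D) (h0 : ∀ ω, 0 ≤ D ω) (hC : ∀ᵐ ω ∂μ, D ω ≤ C)
    (hc : ∀ᵐ ω ∂μ, c ≤ (μ[A.indicator (fun _ => (1 : ℝ)) | m]) ω) :
    c * ∫ ω, D ω ∂μ ≤ ∫ ω, D ω * A.indicator (fun _ => (1 : ℝ)) ω ∂μ := by
  have hA1 : Integrable (A.indicator (fun _ => (1 : ℝ))) μ :=
    (integrable_const (1 : ℝ)).indicator hA
  have hb : ∀ᵐ ω ∂μ, ‖D ω‖ ≤ C := by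
    filter_upwards [hC] with ω h
    rwa [Real.norm_of_nonneg (h0 ω)]
  have hDm : AEStronglyMeasurable D μ := (hD.mono hm).aestronglyMeasurable
  have hDi : Integrable D μ := Integrable.of_bound hDm C hb
  have hDA : Integrable (D * A.indicator (fun _ => (1 : ℝ))) μ := hA1.bdd_mul hDm hb
  have hDE : Integrable (fun ω => D ω * (μ[A.indicator (fun _ => (1 : ℝ)) | m]) ω) μ :=
    integrable_condExp.bdd_mul hDm hb
  calc c * ∫ ω, D ω ∂μ = ∫ ω, D ω * c ∂μ := by rw [integral_mul_const, mul_comm]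
    _ ≤ ∫ ω, D ω * (μ[A.indicator (fun _ => (1 : ℝ)) | m]) ω ∂μ := by
        refine integral_mono_ae (hDi.mul_const c) hDE ?_
        filter_upwards [hc] with ω h using mul_le_mul_of_nonneg_left h (h0 ω)
    _ = ∫ ω, (μ[D * A.indicator (fun _ => (1 : ℝ)) | m]) ω ∂μ :=
        integral_congr_ae (condExp_mul_of_stronglyMeasurable_left hD hDA hA1).symm
    _ = _ := integral_condExp hm

/-- The drift inequality: with up-probability at least `p`, the expected potential drops in each
step by at least the probability of being at a level `≤ S`. -/
lemma expect_potential_succ {Ω : Type*} {m m0 : MeasurableSpace Ω} {μ : Measure Ω}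
    [IsProbabilityMeasure μ] (hm : m ≤ m0) {X Y : Ω → ℤ}
    {p : ℝ} (hp : p ∈ Set.Ioc (1 / 2 : ℝ) 1) (S : ℕ)
    (hX : Measurable[m] X) (hY : Measurable[m0] Y) {N : ℕ} (hN : ∀ᵐ ω ∂μ, |X ω| ≤ N)
    (hstep : ∀ᵐ ω ∂μ, |Y ω - X ω| = 1)
    (hcond : ∀ᵐ ω ∂μ,
      p ≤ (μ[Set.indicator {ω' | Y ω' = X ω' + 1} (fun _ => (1 : ℝ)) | m]) ω) :
    ∫ ω, potential p S (Y ω) ∂μ + μ.real {ω | X ω ≤ (S : ℤ)}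
      ≤ ∫ ω, potential p S (X ω) ∂μ := by
  set G := potential p S with hG
  have hX0 : Measurable X := hX.mono hm le_rfl
  have hanti : Antitone G := potential_antitone hp S
  have hG0 : ∀ z, 0 ≤ G z := potential_nonneg hp S
  set A : Set Ω := {ω' | Y ω' = X ω' + 1} with hAdef
  have hA : MeasurableSet A := measurableSet_eq_fun hY (hX0.add_const 1)
  have hB : MeasurableSet {ω | X ω ≤ (S : ℤ)} := measurableSet_le hX0 measurable_const
  -- `X` is bounded below, and `G` is nonincreasing and nonnegative.
  have hint : ∀ k : ℤ, Integrable (fun ω => G (X ω + k)) μ := by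
    intro k
    refine Integrable.of_bound (C := G (-N + k))
      ((Measurable.of_discrete (f := fun z => G (z + k))).comp hX0).aestronglyMeasurable ?_
    filter_upwards [hN] with ω h
    rw [Real.norm_of_nonneg (hG0 _)]
    exact hanti (by linarith [(abs_le.1 h).1])
  set D : Ω → ℝ := fun ω => G (X ω - 1) - G (X ω + 1) with hD
  have hi1 : Integrable (fun ω => G (X ω - 1)) μ := hint (-1)
  have hDi : Integrable D μ := hi1.sub (hint 1)
  have hDm : StronglyMeasurable[m] D :=
    ((Measurable.of_discrete (f := fun z : ℤ => G (z - 1) - G (z + 1))).comp hX).stronglyMeasurable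
  have hD0 : ∀ ω, 0 ≤ D ω := fun ω => sub_nonneg.2 (hanti (by omega))
  have hDC : ∀ᵐ ω ∂μ, D ω ≤ G (-N - 1) := by
    filter_upwards [hN] with ω h
    have : G (X ω - 1) ≤ G (-N - 1) := hanti (by linarith [(abs_le.1 h).1])
    simp only [hD]
    linarith [hG0 (X ω + 1)]
  have key := integral_mul_indicator_ge hm hA hDm hD0 hDC hcond
  have hDA : Integrable (fun ω => D ω * A.indicator (fun _ => (1 : ℝ)) ω) μ := by
    have : (fun ω => D ω * A.indicator (fun _ => (1 : ℝ)) ω) = A.indicator D := by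
      ext ω; by_cases h : ω ∈ A <;> simp [h]
    rw [this]; exact hDi.indicator hA
  have hYeq : ∫ ω, G (Y ω) ∂μ
      = ∫ ω, G (X ω - 1) ∂μ - ∫ ω, D ω * A.indicator (fun _ => (1 : ℝ)) ω ∂μ := by
    rw [← integral_sub hi1 hDA]
    refine integral_congr_ae ?_
    filter_upwards [hstep] with ω h
    by_cases hω : ω ∈ A
    · have h' : Y ω = X ω + 1 := hω
      simp [hω, hD, h']
    · have h' : ¬ Y ω = X ω + 1 := hω
      have h2 : Y ω = X ω - 1 := by
        rcases (abs_eq (by norm_num)).1 h with h | h <;> omega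
      simp [hω, h2]
  have hXeq : ∫ ω, G (X ω) ∂μ
      = ∫ ω, G (X ω - 1) ∂μ - p * ∫ ω, D ω ∂μ + μ.real {ω | X ω ≤ (S : ℤ)} := by
    have hpD : Integrable (fun ω => G (X ω - 1) - p * D ω) μ := hi1.sub (hDi.const_mul p)
    have hBi : Integrable ({ω | X ω ≤ (S : ℤ)}.indicator (1 : Ω → ℝ)) μ :=
      (integrable_const (1 : ℝ)).indicator hB
    rw [← integral_indicator_one hB, ← integral_const_mul,
      ← integral_sub hi1 (hDi.const_mul p), ← integral_add hpD hBi]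
    refine integral_congr_ae (Filter.Eventually.of_forall fun ω => ?_)
    have := potential_harmonic hp S (X ω)
    simp only [Set.indicator_apply, Set.mem_setOf_eq, Pi.one_apply, hD]
    rw [hG, ← this]
    ring
  linarith

/-- An adapted integer process with steps of size 1 and conditional
probability of stepping up at least `p > 1/2` spends expected time at most
`(p + S(2p-1))/(2p-1)^2` at levels `≤ S`. -/
theorem stmt_0
    {Ω : Type*} {m0 : MeasurableSpace Ω} {μ : Measure Ω} [IsProbabilityMeasure μ]
    (ℱ : Filtration ℕ m0) (Z : ℕ → Ω → ℤ)
    (p : ℝ) (hp : p ∈ Set.Ioc (1 / 2 : ℝ) 1) (S : ℕ)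
    (hadapted : ∀ t, Measurable[ℱ t] (Z t))
    (hZ0 : ∀ ω, Z 0 ω = 0)
    (hstep : ∀ t, ∀ᵐ ω ∂μ, |Z (t + 1) ω - Z t ω| = 1)
    (hcond : ∀ t, ∀ᵐ ω ∂μ,
      p ≤ (μ[Set.indicator {ω' | Z (t + 1) ω' = Z t ω' + 1} (fun _ => (1 : ℝ)) | ℱ t]) ω) :
    ∫⁻ ω, ∑' t : ℕ, (if Z t ω ≤ (S : ℤ) then (1 : ℝ≥0∞) else 0) ∂μ
      ≤ ENNReal.ofReal ((p + S * (2 * p - 1)) / (2 * p - 1) ^ 2) := by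
  have hd : 2 * p - 1 ≠ 0 := by linarith [hp.1]
  have hmeas : ∀ t, Measurable (Z t) := fun t => (hadapted t).mono (ℱ.le t) le_rfl
  have hB : ∀ t, MeasurableSet {ω | Z t ω ≤ (S : ℤ)} := fun t =>
    measurableSet_le (hmeas t) measurable_const
  have hbound : ∀ t : ℕ, ∀ᵐ ω ∂μ, |Z t ω| ≤ t := by
    intro t
    induction t with
    | zero => simp [hZ0]
    | succ t ih =>
      filter_upwards [ih, hstep t] with ω h1 h2
      have := abs_add_le (Z (t + 1) ω - Z t ω) (Z t ω)
      rw [sub_add_cancel] at this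
      push_cast
      linarith
  have hsum : ∀ n : ℕ, ∫ ω, potential p S (Z n ω) ∂μ
      + ∑ t ∈ Finset.range n, μ.real {ω | Z t ω ≤ (S : ℤ)} ≤ potential p S 0 := by
    intro n
    induction n with
    | zero => simp [hZ0]
    | succ n ih =>
      rw [Finset.sum_range_succ]
      have := expect_potential_succ (ℱ.le n) hp S (hadapted n) (hmeas (n + 1)) (hbound n)
        (hstep n) (hcond n)
      linarith
  have hG : potential p S 0 = (p + S * (2 * p - 1)) / (2 * p - 1) ^ 2 := by
    rw [potential_of_le (by positivity)]
    push_cast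
    field_simp
    ring
  have hterm : ∀ t, ∫⁻ ω, (if Z t ω ≤ (S : ℤ) then (1 : ℝ≥0∞) else 0) ∂μ
      = μ {ω | Z t ω ≤ (S : ℤ)} := by
    intro t
    rw [← lintegral_indicator_one (hB t)]
    simp [Set.indicator_apply]
  rw [lintegral_tsum fun t =>
    (Measurable.ite (hB t) measurable_const measurable_const).aemeasurable]
  simp only [hterm]
  rw [ENNReal.tsum_eq_iSup_nat, ← hG]
  refine iSup_le fun n => ?_
  have h0 : 0 ≤ ∫ ω, potential p S (Z n ω) ∂μ :=
    integral_nonneg fun ω => potential_nonneg hp S _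
  calc ∑ t ∈ Finset.range n, μ {ω | Z t ω ≤ (S : ℤ)}
      = ENNReal.ofReal (∑ t ∈ Finset.range n, μ.real {ω | Z t ω ≤ (S : ℤ)}) := by
        rw [ENNReal.ofReal_sum_of_nonneg fun _ _ => measureReal_nonneg]
        simp
    _ ≤ _ := ENNReal.ofReal_le_ofReal (by linarith [hsum n])
end

section
/- Let p ∈ (1/2, 1] and let Δ be an integer with Δ ≤ 0. Let (Z(k))_{k≥0} be an integer-valued process adapted to a filtration (F_k) with Z(0) = 0 such that almost surely Z(k+1) − Z(k) ∈ {−1, 0, +1} for all k, the event {Z(k+1) ≠ Z(k)} is F_k-measurable for all k, and on the event {Z(k+1) ≠ Z(k)} one has P(Z(k+1) = Z(k) − 1 | F_k) ≥ p almost surely. Then E[∑_{k=0}^∞ 1{Z(k+1) ≠ Z(k) and Z(k) ≥ Δ}] ≤ (p − Δ(2p − 1))/(2p − 1)². -/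
open MeasureTheory ProbabilityTheory
open scoped ENNReal

/-!
The proof is a Lyapunov-function argument. Write `d = 2p - 1`, `q = 1 - p`, `r = q / p`, and let
`lyap p Δ z` be the expected number of future moves at levels `≥ Δ` of the random walk started at
`z` that steps down with probability exactly `p` and up with probability `q`: it equals
`p / d² + (z - Δ) / d` for `z ≥ Δ`, and `(p / d²) r ^ (Δ - z)` for `z ≤ Δ`. This function is
nonnegative, nondecreasing, and satisfies
`p * lyap (z - 1) + q * lyap (z + 1) = lyap z - 1{Δ ≤ z}` (`lyap_harmonic`). Because it is
nondecreasing, a conditional probability of stepping down larger than `p` only decreases its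
expectation, so `E[lyap (Z (k+1))] + P(move at k, Δ ≤ Z k) ≤ E[lyap (Z k)]` (`lyap_drift`).
Telescoping bounds every partial sum by `lyap 0 = (p - Δ d) / d²`. Integrability is no issue, since
`|Z k| ≤ k` almost surely.
-/

/-- Expected number of moves at levels `≥ Δ` for the walk from `z` stepping down with probability
`p` and up with probability `1 - p`. The truncations `toNat` make the geometric factor equal to `1`
above `Δ` and the linear term equal to `0` below `Δ`. -/
noncomputable def lyap (p : ℝ) (Δ z : ℤ) : ℝ :=
  p / (2 * p - 1) ^ 2 * ((1 - p) / p) ^ (Δ - z).toNat + ((z - Δ).toNat : ℝ) / (2 * p - 1)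

lemma lyap_add (p : ℝ) (Δ : ℤ) (n : ℕ) :
    lyap p Δ (Δ + n) = p / (2 * p - 1) ^ 2 + n / (2 * p - 1) := by
  have h1 : (Δ - (Δ + n)).toNat = 0 := by omega
  have h2 : (Δ + n - Δ).toNat = n := by omega
  rw [lyap, h1, h2]; simp

lemma lyap_sub (p : ℝ) (Δ : ℤ) (n : ℕ) :
    lyap p Δ (Δ - n) = p / (2 * p - 1) ^ 2 * ((1 - p) / p) ^ n := by
  have h1 : (Δ - (Δ - n)).toNat = n := by omega
  have h2 : (Δ - n - Δ).toNat = 0 := by omega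
  rw [lyap, h1, h2]; simp

lemma lyap_nonneg {p : ℝ} (hp : p ∈ Set.Ioc (1 / 2 : ℝ) 1) (Δ z : ℤ) : 0 ≤ lyap p Δ z := by
  obtain ⟨h1, h2⟩ := hp
  have hd : 0 < 2 * p - 1 := by linarith
  have hp0 : 0 < p := by linarith
  have hq : 0 ≤ 1 - p := by linarith
  unfold lyap
  positivity

lemma lyap_mono {p : ℝ} (hp : p ∈ Set.Ioc (1 / 2 : ℝ) 1) (Δ : ℤ) : Monotone (lyap p Δ) := by
  obtain ⟨h1, h2⟩ := hp
  have hd : 0 < 2 * p - 1 := by linarith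
  have hp0 : 0 < p := by linarith
  have hq : 0 ≤ 1 - p := by linarith
  intro a b hab
  have hr : (1 - p) / p ≤ 1 := by rw [div_le_one hp0]; linarith
  have e1 : ((1 - p) / p) ^ (Δ - a).toNat ≤ ((1 - p) / p) ^ (Δ - b).toNat :=
    pow_le_pow_of_le_one (by positivity) hr (by omega)
  have e2 : ((a - Δ).toNat : ℝ) ≤ ((b - Δ).toNat : ℝ) := by
    exact_mod_cast (by omega : (a - Δ).toNat ≤ (b - Δ).toNat)
  unfold lyap
  gcongr

/-- The first-step equation that determines the expected number of moves. -/
lemma lyap_harmonic {p : ℝ} (hp : p ∈ Set.Ioc (1 / 2 : ℝ) 1) (Δ z : ℤ) :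
    p * lyap p Δ (z - 1) + (1 - p) * lyap p Δ (z + 1)
      = lyap p Δ z - (if Δ ≤ z then 1 else 0) := by
  obtain ⟨h1, h2⟩ := hp
  have hd : 2 * p - 1 ≠ 0 := by linarith
  have hp0 : p ≠ 0 := by linarith
  rcases lt_trichotomy z Δ with h | rfl | h
  · obtain ⟨n, rfl⟩ : ∃ n : ℕ, z = Δ - (n + 1 : ℕ) := ⟨(Δ - z - 1).toNat, by omega⟩
    rw [show Δ - ((n + 1 : ℕ) : ℤ) - 1 = Δ - (n + 2 : ℕ) by push_cast; ring,
      show Δ - ((n + 1 : ℕ) : ℤ) + 1 = Δ - (n : ℕ) by push_cast; ring,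
      lyap_sub, lyap_sub, lyap_sub, if_neg (by omega), pow_add _ n 2, pow_add _ n 1]
    generalize ((1 - p) / p) ^ n = x
    obtain ⟨d, hd'⟩ : ∃ d, d = 2 * p - 1 := ⟨_, rfl⟩
    rw [← hd'] at hd ⊢
    field_simp
    rw [hd']
    ring
  · have e0 := lyap_add p z 0
    have e1 := lyap_add p z 1
    have e2 := lyap_sub p z 1
    simp only [Nat.cast_zero, add_zero, Nat.cast_one] at e0 e1 e2
    rw [e0, e1, e2, if_pos le_rfl]
    obtain ⟨d, hd'⟩ : ∃ d, d = 2 * p - 1 := ⟨_, rfl⟩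
    rw [← hd'] at hd ⊢
    field_simp
    rw [hd']
    ring
  · obtain ⟨n, rfl⟩ : ∃ n : ℕ, z = Δ + (n + 1 : ℕ) := ⟨(z - Δ - 1).toNat, by omega⟩
    rw [show Δ + ((n + 1 : ℕ) : ℤ) - 1 = Δ + (n : ℕ) by push_cast; ring,
      show Δ + ((n + 1 : ℕ) : ℤ) + 1 = Δ + (n + 2 : ℕ) by push_cast; ring,
      lyap_add, lyap_add, lyap_add, if_pos (by omega)]
    push_cast
    obtain ⟨d, hd'⟩ : ∃ d, d = 2 * p - 1 := ⟨_, rfl⟩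
    rw [← hd'] at hd ⊢
    field_simp
    rw [hd']
    ring

lemma lyap_zero {p : ℝ} (hp : p ∈ Set.Ioc (1 / 2 : ℝ) 1) {Δ : ℤ} (hΔ : Δ ≤ 0) :
    lyap p Δ 0 = (p - Δ * (2 * p - 1)) / (2 * p - 1) ^ 2 := by
  obtain ⟨h1, h2⟩ := hp
  have hd : 2 * p - 1 ≠ 0 := by linarith
  obtain ⟨n, rfl⟩ : ∃ n : ℕ, Δ = -(n : ℤ) := ⟨(-Δ).toNat, by omega⟩
  have := lyap_add p (-(n : ℤ)) n
  rw [neg_add_cancel] at this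
  rw [this]
  push_cast
  field_simp
  ring

/-- A process started at `0` with steps in `{-1, 0, 1}` lies in `[-k, k]` at time `k`. -/
lemma ae_abs_le_of_step {Ω : Type*} {m0 : MeasurableSpace Ω} {μ : Measure Ω} {Z : ℕ → Ω → ℤ}
    (hZ0 : ∀ ω, Z 0 ω = 0)
    (hstep : ∀ k, ∀ᵐ ω ∂μ, Z (k + 1) ω - Z k ω ∈ ({-1, 0, 1} : Set ℤ)) (k : ℕ) :
    ∀ᵐ ω ∂μ, |Z k ω| ≤ k := by
  induction k with
  | zero => simp [hZ0]
  | succ k ih =>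
    filter_upwards [ih, hstep k] with ω h1 h2
    simp only [Set.mem_insert_iff, Set.mem_singleton_iff] at h2
    rw [abs_le] at h1 ⊢
    push_cast
    omega

/-- Any function of an almost surely bounded integer variable is bounded, hence integrable. -/
lemma integrable_comp_of_abs_le {Ω : Type*} {m0 : MeasurableSpace Ω} {μ : Measure Ω}
    [IsFiniteMeasure μ] {X : Ω → ℤ} (hX : Measurable X) {n : ℤ} (hb : ∀ᵐ ω ∂μ, |X ω| ≤ n)
    (g : ℤ → ℝ) : Integrable (fun ω => g (X ω)) μ := by
  refine Integrable.of_bound (C := ∑ i ∈ Finset.Icc (-n) n, |g i|)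
    ((measurable_of_countable g).comp hX).aestronglyMeasurable ?_
  filter_upwards [hb] with ω h
  exact Finset.single_le_sum (f := fun i => |g i|) (fun i _ => abs_nonneg _)
    (Finset.mem_Icc.2 (abs_le.1 h))

/-- If an event has conditional probability at least `p` on a set `M` of the sub-σ-algebra, then a
nonnegative weight supported on `M` satisfies the corresponding inequality of expectations. -/
lemma mul_integral_le_of_condExp {Ω : Type*} {m m0 : MeasurableSpace Ω} {μ : Measure Ω}
    [IsFiniteMeasure μ] (hm : m ≤ m0) {p : ℝ} {M D : Set Ω} (hD : MeasurableSet D)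
    {w : Ω → ℝ} (hw : StronglyMeasurable[m] w) (hwi : Integrable w μ) (hw0 : ∀ ω, 0 ≤ w ω)
    (hwM : ∀ ω, ω ∉ M → w ω = 0)
    (hc : ∀ᵐ ω ∂μ, ω ∈ M → p ≤ (μ[D.indicator (fun _ => (1 : ℝ)) | m]) ω) :
    p * ∫ ω, w ω ∂μ ≤ ∫ ω, w ω * D.indicator (fun _ => (1 : ℝ)) ω ∂μ := by
  set f : Ω → ℝ := D.indicator (fun _ => (1 : ℝ)) with hf
  have hfi : Integrable f μ := (integrable_const 1).indicator hD
  have hwf : Integrable (w * f) μ := by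
    have : w * f = D.indicator w := by
      ext ω; by_cases h : ω ∈ D <;> simp [hf, h]
    rw [this]; exact hwi.indicator hD
  have hpull : μ[w * f | m] =ᵐ[μ] w * μ[f | m] :=
    condExp_mul_of_stronglyMeasurable_left hw hwf hfi
  have e : ∫ ω, w ω * f ω ∂μ = ∫ ω, (μ[w * f | m]) ω ∂μ := (integral_condExp hm).symm
  rw [e, ← integral_const_mul]
  refine integral_mono_ae (hwi.const_mul p) integrable_condExp ?_
  filter_upwards [hpull, hc] with ω h1 h2
  rw [h1]
  by_cases h : ω ∈ M
  · simpa [mul_comm] using mul_le_mul_of_nonneg_left (h2 h) (hw0 ω)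
  · simp [hwM ω h]

/-- One-step drift: the expectation of the Lyapunov function drops by at least the probability of
moving while at a level `≥ Δ`. -/
lemma lyap_drift
    {Ω : Type*} {m0 : MeasurableSpace Ω} {μ : Measure Ω} [IsProbabilityMeasure μ]
    (ℱ : Filtration ℕ m0) (Z : ℕ → Ω → ℤ)
    (p : ℝ) (hp : p ∈ Set.Ioc (1 / 2 : ℝ) 1) (Δ : ℤ)
    (hadapted : ∀ k, Measurable[ℱ k] (Z k))
    (hZ0 : ∀ ω, Z 0 ω = 0)
    (hstep : ∀ k, ∀ᵐ ω ∂μ, Z (k + 1) ω - Z k ω ∈ ({-1, 0, 1} : Set ℤ))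
    (hmove : ∀ k, MeasurableSet[ℱ k] {ω | Z (k + 1) ω ≠ Z k ω})
    (hcond : ∀ k, ∀ᵐ ω ∂μ, Z (k + 1) ω ≠ Z k ω →
      p ≤ (μ[Set.indicator {ω' | Z (k + 1) ω' = Z k ω' - 1} (fun _ => (1 : ℝ)) | ℱ k]) ω)
    (k : ℕ) :
    ∫ ω, lyap p Δ (Z (k + 1) ω) ∂μ + μ.real {ω | Z (k + 1) ω ≠ Z k ω ∧ Δ ≤ Z k ω}
      ≤ ∫ ω, lyap p Δ (Z k ω) ∂μ := by
  have hZm : ∀ k, Measurable (Z k) := fun k => (hadapted k).mono (ℱ.le k) le_rfl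
  set V := lyap p Δ with hV
  set M : Set Ω := {ω | Z (k + 1) ω ≠ Z k ω} with hM
  set D : Set Ω := {ω' | Z (k + 1) ω' = Z k ω' - 1} with hDdef
  set A : Set Ω := {ω | Z (k + 1) ω ≠ Z k ω ∧ Δ ≤ Z k ω} with hA
  have hMm : MeasurableSet M := ℱ.le k _ (hmove k)
  have hD : MeasurableSet D := measurableSet_eq_fun (hZm (k + 1)) ((hZm k).sub_const 1)
  have hAm : MeasurableSet A := hMm.inter (hZm k measurableSet_Ici)
  have hint : ∀ (j : ℕ) (g : ℤ → ℝ), Integrable (fun ω => g (Z j ω)) μ := fun j g =>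
    integrable_comp_of_abs_le (hZm j) (ae_abs_le_of_step hZ0 hstep j) g
  set w : Ω → ℝ := M.indicator (fun ω => V (Z k ω + 1) - V (Z k ω - 1)) with hw
  set u : Ω → ℝ := M.indicator (fun ω => V (Z k ω + 1) - V (Z k ω)) with hu
  have hwi : Integrable w μ := (hint k fun z => V (z + 1) - V (z - 1)).indicator hMm
  have hui : Integrable u μ := (hint k fun z => V (z + 1) - V z).indicator hMm
  have hwm : StronglyMeasurable[ℱ k] w :=
    (((measurable_of_countable fun z : ℤ => V (z + 1) - V (z - 1)).comp
      (hadapted k)).stronglyMeasurable).indicator (hmove k)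
  have hkey := mul_integral_le_of_condExp (ℱ.le k) (p := p) (M := M) (D := D) hD hwm hwi
    (fun ω => Set.indicator_nonneg
      (fun ω _ => sub_nonneg.2 (lyap_mono hp Δ (by omega : Z k ω - 1 ≤ Z k ω + 1))) ω)
    (fun ω h => Set.indicator_of_notMem h _) (hcond k)
  have hwDi : Integrable (fun ω => w ω * D.indicator (fun _ => (1 : ℝ)) ω) μ := by
    have : (fun ω => w ω * D.indicator (fun _ => (1 : ℝ)) ω) = D.indicator w := by
      ext ω; by_cases h : ω ∈ D <;> simp [h]
    rw [this]; exact hwi.indicator hD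
  -- On a move the increment is `V (z + 1) - V z`, corrected by `V (z + 1) - V (z - 1)` on a
  -- down-step.
  have hincr : ∫ ω, V (Z (k + 1) ω) ∂μ
      = ∫ ω, (V (Z k ω) + u ω - w ω * D.indicator (fun _ => (1 : ℝ)) ω) ∂μ := by
    refine integral_congr_ae ?_
    filter_upwards [hstep k] with ω h
    simp only [Set.mem_insert_iff, Set.mem_singleton_iff] at h
    rcases h with h | h | h
    · have e : Z (k + 1) ω = Z k ω - 1 := by omega
      have h1 : ω ∈ M := by simp only [hM, Set.mem_ofPred_eq]; omega
      have h2 : ω ∈ D := e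
      simp [hu, hw, h1, h2, e]
    · have e : Z (k + 1) ω = Z k ω := by omega
      have h1 : ω ∉ M := by simp only [hM, Set.mem_ofPred_eq]; omega
      simp [hu, hw, h1, e]
    · have e : Z (k + 1) ω = Z k ω + 1 := by omega
      have h1 : ω ∈ M := by simp only [hM, Set.mem_ofPred_eq]; omega
      have h2 : ω ∉ D := by simp only [hDdef, Set.mem_ofPred_eq]; omega
      simp [hu, hw, h1, h2, e]
  have hharm : ∫ ω, (u ω - p * w ω) ∂μ = - μ.real A := by
    rw [← integral_indicator_one hAm, ← integral_neg]
    refine integral_congr_ae (Filter.Eventually.of_forall fun ω => ?_)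
    have hz := lyap_harmonic hp Δ (Z k ω)
    by_cases h1 : ω ∈ M
    · by_cases h2 : Δ ≤ Z k ω
      · have h3 : ω ∈ A := ⟨h1, h2⟩
        rw [if_pos h2] at hz
        simp only [hu, hw, hV, h1, h3, Set.indicator_of_mem, Pi.one_apply]
        linarith
      · have h3 : ω ∉ A := fun h => h2 h.2
        rw [if_neg h2] at hz
        simp only [hu, hw, hV, h1, h3, Set.indicator_of_mem, not_false_eq_true,
          Set.indicator_of_notMem]
        linarith
    · have h3 : ω ∉ A := fun h => h1 h.1
      simp [hu, hw, h1, h3]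
  rw [integral_sub hui (hwi.const_mul p), integral_const_mul] at hharm
  have hVu : Integrable (fun ω => V (Z k ω) + u ω) μ := (hint k V).add hui
  rw [hincr, integral_sub hVu hwDi, integral_add (hint k V) hui]
  linarith

/-- An adapted integer process `Z` with steps in `{-1, 0, +1}`,
whose moves are predictable events, and which on each move steps down with
conditional probability at least `p > 1/2`, makes in expectation at most
`(p - Δ(2p-1))/(2p-1)^2` moves while at a level `≥ Δ` (for `Δ ≤ 0`). -/
theorem stmt_7
    {Ω : Type*} {m0 : MeasurableSpace Ω} {μ : Measure Ω} [IsProbabilityMeasure μ]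
    (ℱ : Filtration ℕ m0) (Z : ℕ → Ω → ℤ)
    (p : ℝ) (hp : p ∈ Set.Ioc (1 / 2 : ℝ) 1) (Δ : ℤ) (hΔ : Δ ≤ 0)
    (hadapted : ∀ k, Measurable[ℱ k] (Z k))
    (hZ0 : ∀ ω, Z 0 ω = 0)
    (hstep : ∀ k, ∀ᵐ ω ∂μ, Z (k + 1) ω - Z k ω ∈ ({-1, 0, 1} : Set ℤ))
    (hmove : ∀ k, MeasurableSet[ℱ k] {ω | Z (k + 1) ω ≠ Z k ω})
    (hcond : ∀ k, ∀ᵐ ω ∂μ, Z (k + 1) ω ≠ Z k ω →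
      p ≤ (μ[Set.indicator {ω' | Z (k + 1) ω' = Z k ω' - 1} (fun _ => (1 : ℝ)) | ℱ k]) ω) :
    ∫⁻ ω, ∑' k : ℕ, (if Z (k + 1) ω ≠ Z k ω ∧ Δ ≤ Z k ω then (1 : ℝ≥0∞) else 0) ∂μ
      ≤ ENNReal.ofReal ((p - Δ * (2 * p - 1)) / (2 * p - 1) ^ 2) := by
  have hZm : ∀ k, Measurable (Z k) := fun k => (hadapted k).mono (ℱ.le k) le_rfl
  set A : ℕ → Set Ω := fun k => {ω | Z (k + 1) ω ≠ Z k ω ∧ Δ ≤ Z k ω} with hA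
  have hAm : ∀ k, MeasurableSet (A k) := fun k =>
    (ℱ.le k _ (hmove k)).inter (hZm k measurableSet_Ici)
  have hite : ∀ k ω, (if Z (k + 1) ω ≠ Z k ω ∧ Δ ≤ Z k ω then (1 : ℝ≥0∞) else 0)
      = (A k).indicator 1 ω := fun k ω => by
    simp only [hA, Set.indicator_apply, Set.mem_ofPred_eq, Pi.one_apply]
  simp only [hite]
  rw [lintegral_tsum fun k => (measurable_one.indicator (hAm k)).aemeasurable]
  simp only [lintegral_indicator_one (hAm _)]
  refine ENNReal.tsum_le_of_sum_range_le fun n => ?_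
  have htel : ∀ n : ℕ, ∑ k ∈ Finset.range n, μ.real (A k) + ∫ ω, lyap p Δ (Z n ω) ∂μ
      ≤ lyap p Δ 0 := by
    intro n
    induction n with
    | zero => simp [hZ0]
    | succ n ih =>
      have := lyap_drift ℱ Z p hp Δ hadapted hZ0 hstep hmove hcond n
      rw [Finset.sum_range_succ]
      linarith
  have hnn : 0 ≤ ∫ ω, lyap p Δ (Z n ω) ∂μ := integral_nonneg fun ω => lyap_nonneg hp Δ _
  calc ∑ k ∈ Finset.range n, μ (A k)
      = ENNReal.ofReal (∑ k ∈ Finset.range n, μ.real (A k)) := by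
        rw [ENNReal.ofReal_sum_of_nonneg fun _ _ => measureReal_nonneg]
        simp
    _ ≤ _ := by
        rw [← lyap_zero hp hΔ]
        exact ENNReal.ofReal_le_ofReal (by linarith [htel n])
end
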